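/- Consider a scaling of the heterogeneous key predistribution parameters satisfying α_n λ_1(n) = c_n (log n)/n with lim_{n→∞} c_n = c > 0, and suppose additionally that p_11(n) = ω(1/(n α_n)), i.e., n α_n p_11(n) → ∞. Then p_rr(n) = o((log n)²/(n α_n)), i.e., p_rr(n) · n α_n / (log n)² → 0 as n → ∞. -/

import Mathlib

open Filter

/-- Probability that a uniformly random `b`-subset of a `P`-set avoids a fixed `a`-subset. -/
noncomputable def avoidProb (P a b : ℕ) : ℝ := ((P - a).choose b : ℝ) / (P.choose b : ℝ)

/-- `p_{ab}` : probability that independent uniformly random key rings of sizes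
`a` and `b` (from a pool of size `P`) intersect. -/
noncomputable def pEdge (P a b : ℕ) : ℝ := 1 - avoidProb P a b

/-- `λ_i` : mean edge probability of a class-`i` node in the inhomogeneous random key graph. -/
noncomputable def lamb {r : ℕ} (μ : Fin (r + 1) → ℝ) (K : Fin (r + 1) → ℕ) (P : ℕ)
    (i : Fin (r + 1)) : ℝ :=
  ∑ j, μ j * pEdge P (K i) (K j)

/-!
The edge probability `p_{ab}` equals `min(1, ab/P)` up to a factor `2`. Since `a²/P · b²/P` is the
square of `ab/P`, this gives `p_{aa} p_{bb} ≤ 4 p_{ab}²`: the mixed edge probability dominates the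
geometric mean of the two diagonal ones. The scaling bounds the single summand `μ_r p_{1r}` of
`λ_1`, so `n αₙ p_{1r} = O(log n)`, and dividing
`(n αₙ p_{11}) (n αₙ p_{rr}) ≤ 4 (n αₙ p_{1r})² = O((log n)²)` by `n αₙ p_{11} → ∞` gives the claim.
-/

open Asymptotics

section AvoidProb

variable (P a b : ℕ)

lemma avoidProb_nonneg : 0 ≤ avoidProb P a b :=
  div_nonneg (Nat.cast_nonneg _) (Nat.cast_nonneg _)

lemma avoidProb_le_one : avoidProb P a b ≤ 1 :=
  div_le_one_of_le₀ (mod_cast Nat.choose_le_choose b (P.sub_le a)) (Nat.cast_nonneg _)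

@[simp]
lemma avoidProb_zero_right : avoidProb P a 0 = 1 := by simp [avoidProb]

variable {P a b}

lemma avoidProb_eq_zero (h : P - a < b) : avoidProb P a b = 0 := by
  simp [avoidProb, Nat.choose_eq_zero_of_lt h]

/-- Drawing the `b + 1` elements one at a time, the last draw avoids the `a`-subset with probability
`(P - a - b) / (P - b)`. -/
lemma avoidProb_succ_mul (h : a + b < P) :
    avoidProb P a (b + 1) * (P - b) = avoidProb P a b * (P - a - b) := by
  have hP : (P.choose (b + 1) : ℝ) * (b + 1) = P.choose b * (P - b) := by
    rw [← Nat.cast_sub (by lia)]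
    exact_mod_cast P.choose_succ_right_eq b
  have hPa : ((P - a).choose (b + 1) : ℝ) * (b + 1) = (P - a).choose b * (P - a - b) := by
    rw [← Nat.cast_sub (by lia), ← Nat.cast_sub (by lia)]
    exact_mod_cast (P - a).choose_succ_right_eq b
  have hb : (P.choose b : ℝ) ≠ 0 := mod_cast (Nat.choose_pos (by lia)).ne'
  have hb_succ : (P.choose (b + 1) : ℝ) ≠ 0 := mod_cast (Nat.choose_pos (by lia)).ne'
  unfold avoidProb
  rw [div_mul_eq_mul_div, div_mul_eq_mul_div, div_eq_div_iff hb_succ hb]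
  refine mul_right_cancel₀ (b.cast_add_one_ne_zero (R := ℝ)) ?_
  linear_combination
    (P.choose b : ℝ) * (P - b) * hPa - ((P - a).choose b : ℝ) * (P - a - b) * hP

variable (P a b) in
lemma avoidProb_mul_add_le : avoidProb P a b * (P + a * b) ≤ P := by
  induction b with
  | zero => simp
  | succ b ih =>
    obtain h | h := lt_or_ge (P - a) (b + 1)
    · simp [avoidProb_eq_zero h]
    have hP : (a : ℝ) + b + 1 ≤ P := mod_cast (by lia : a + b + 1 ≤ P)
    have hPb : (0 : ℝ) < P - b := by linarith [a.cast_nonneg (α := ℝ)]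
    have hstep : ((P : ℝ) - a - b) * (P + a * (b + 1)) ≤ (P - b) * (P + a * b) := by
      have hdiff : (0 : ℝ) ≤ a * (a + b + a * b) := by positivity
      linarith
    push_cast
    refine le_of_mul_le_mul_right ?_ hPb
    calc avoidProb P a (b + 1) * (P + a * (b + 1)) * (P - b)
        = avoidProb P a b * ((P - a - b) * (P + a * (b + 1))) := by
          linear_combination (P + a * (b + 1) : ℝ) * avoidProb_succ_mul (by lia : a + b < P)
      _ ≤ avoidProb P a b * ((P - b) * (P + a * b)) :=
          mul_le_mul_of_nonneg_left hstep (avoidProb_nonneg P a b)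
      _ = avoidProb P a b * (P + a * b) * (P - b) := by ring
      _ ≤ P * (P - b) := mul_le_mul_of_nonneg_right ih hPb.le

variable (a) in
lemma sub_mul_le_avoidProb_mul (hb : b ≤ P) : P - a * b ≤ avoidProb P a b * P := by
  induction b with
  | zero => simp
  | succ b ih =>
    obtain h | h := lt_or_ge (P - a) (b + 1)
    · have hle : P ≤ a * (b + 1) := by nlinarith [(by lia : 1 ≤ a), (by lia : P ≤ a + b)]
      rw [avoidProb_eq_zero h, zero_mul]
      exact sub_nonpos.2 (mod_cast hle)
    have hP : (a : ℝ) + b + 1 ≤ P := mod_cast (by lia : a + b + 1 ≤ P)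
    have hPb : (0 : ℝ) < P - b := by linarith [a.cast_nonneg (α := ℝ)]
    have hab : (a * b : ℝ) ≤ a * a * b := by
      gcongr
      exact_mod_cast a.le_mul_self
    push_cast
    refine le_of_mul_le_mul_right ?_ hPb
    calc ((P : ℝ) - a * (b + 1)) * (P - b)
        ≤ (P - a * b) * (P - a - b) := by linarith
      _ ≤ avoidProb P a b * P * (P - a - b) :=
          mul_le_mul_of_nonneg_right (ih (by lia)) (by linarith)
      _ = avoidProb P a (b + 1) * P * (P - b) := by
          linear_combination -(P : ℝ) * avoidProb_succ_mul (by lia : a + b < P)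

end AvoidProb

section PEdge

variable (P a b : ℕ)

lemma pEdge_nonneg : 0 ≤ pEdge P a b :=
  sub_nonneg.2 (avoidProb_le_one P a b)

lemma pEdge_le_one : pEdge P a b ≤ 1 :=
  sub_le_self 1 (avoidProb_nonneg P a b)

lemma mul_div_add_le_pEdge : (a * b : ℝ) / (P + a * b) ≤ pEdge P a b := by
  refine div_le_of_le_mul₀ (by positivity) (pEdge_nonneg P a b) ?_
  unfold pEdge
  linarith [avoidProb_mul_add_le P a b]

lemma min_one_mul_div_le_two_mul_pEdge : min 1 (a * b / P : ℝ) ≤ 2 * pEdge P a b := by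
  obtain rfl | hP := P.eq_zero_or_pos
  · simpa using pEdge_nonneg 0 a b
  have hP' : (0 : ℝ) < P := mod_cast hP
  set x : ℝ := a * b
  have hx_nonneg : 0 ≤ x := by positivity
  calc min 1 (x / P) ≤ 2 * (x / (P + x)) := by
        obtain h | h := le_total x P
        · refine (min_le_right _ _).trans ?_
          rw [mul_div_assoc', div_le_div_iff₀ hP' (by positivity)]
          linarith [mul_le_mul_of_nonneg_left h hx_nonneg]
        · refine (min_le_left _ _).trans ?_
          rw [mul_div_assoc', one_le_div (by positivity)]
          linarith
    _ ≤ 2 * pEdge P a b := by gcongr; exact mul_div_add_le_pEdge P a b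

variable {P a b}

variable (a) in
lemma pEdge_le_mul_div (hb : b ≤ P) : pEdge P a b ≤ a * b / P := by
  obtain rfl | hP := P.eq_zero_or_pos
  · obtain rfl : b = 0 := by lia
    simp [pEdge]
  rw [le_div_iff₀ (mod_cast hP)]
  unfold pEdge
  linarith [sub_mul_le_avoidProb_mul a hb]

variable (a) in
lemma pEdge_le_min_one_mul_div (hb : b ≤ P) : pEdge P a b ≤ min 1 (a * b / P : ℝ) :=
  le_min (pEdge_le_one P a b) (pEdge_le_mul_div a hb)

lemma pEdge_self_mul_pEdge_self_le (ha : a ≤ P) (hb : b ≤ P) :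
    pEdge P a a * pEdge P b b ≤ 4 * pEdge P a b ^ 2 := by
  set x : ℝ := a * a / P with hx
  set y : ℝ := b * b / P with hy
  set z : ℝ := a * b / P with hz
  have hz_nonneg : 0 ≤ z := by positivity
  have hxy : x * y = z ^ 2 := by rw [hx, hy, hz]; ring
  calc pEdge P a a * pEdge P b b
      ≤ min 1 x * min 1 y :=
        mul_le_mul (pEdge_le_min_one_mul_div a ha) (pEdge_le_min_one_mul_div b hb)
          (pEdge_nonneg P b b) (by positivity)
    _ ≤ min 1 (x * y) :=
        le_min (mul_le_one₀ (min_le_left _ _) (by positivity) (min_le_left _ _))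
          (mul_le_mul (min_le_right _ _) (min_le_right _ _) (by positivity) (by positivity))
    _ = min 1 z ^ 2 := by
        rw [hxy, pow_left_monotoneOn.map_min zero_le_one hz_nonneg, one_pow]
    _ ≤ (2 * pEdge P a b) ^ 2 := by gcongr; exact min_one_mul_div_le_two_mul_pEdge P a b
    _ = 4 * pEdge P a b ^ 2 := by ring

end PEdge

lemma mul_pEdge_le_lamb {r : ℕ} {μ : Fin (r + 1) → ℝ} (hμ : ∀ k, 0 ≤ μ k)
    (K : Fin (r + 1) → ℕ) (P : ℕ) (i j : Fin (r + 1)) :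
    μ j * pEdge P (K i) (K j) ≤ lamb μ K P i :=
  Finset.single_le_sum (f := fun k => μ k * pEdge P (K i) (K k))
    (fun k _ => mul_nonneg (hμ k) (pEdge_nonneg _ _ _)) (Finset.mem_univ j)

section ScalingAsymptotics

variable {ι : Type*} {l : Filter ι} {P : ι → ℕ}

lemma isBigO_pEdge_lamb {r : ℕ} {μ : Fin (r + 1) → ℝ} (hμ : ∀ k, 0 ≤ μ k)
    (K : ι → Fin (r + 1) → ℕ) (i : Fin (r + 1)) {j : Fin (r + 1)} (hj : 0 < μ j) :
    (fun n => pEdge (P n) (K n i) (K n j)) =O[l] fun n => lamb μ (K n) (P n) i := by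
  refine .of_bound (μ j)⁻¹ (.of_forall fun n => ?_)
  rw [Real.norm_of_nonneg (pEdge_nonneg _ _ _), le_inv_mul_iff₀ hj]
  exact (mul_pEdge_le_lamb hμ (K n) (P n) i j).trans (le_abs_self _)

lemma isBigO_pEdge_self_mul_pEdge_self {a b : ι → ℕ} (ha : ∀ᶠ n in l, a n ≤ P n)
    (hb : ∀ᶠ n in l, b n ≤ P n) :
    (fun n => pEdge (P n) (a n) (a n) * pEdge (P n) (b n) (b n)) =O[l]
      fun n => pEdge (P n) (a n) (b n) ^ 2 := by
  refine .of_bound 4 ?_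
  filter_upwards [ha, hb] with n han hbn
  rw [Real.norm_of_nonneg (mul_nonneg (pEdge_nonneg _ _ _) (pEdge_nonneg _ _ _)),
    Real.norm_of_nonneg (sq_nonneg _)]
  exact pEdge_self_mul_pEdge_self_le han hbn

lemma isBigO_natCast_mul_of_eq_mul_div {f c L : ℕ → ℝ} (hf : ∀ᶠ n in atTop, f n = c n * L n / n)
    (hc : c =O[atTop] fun _ => (1 : ℝ)) : (fun n => n * f n) =O[atTop] L := by
  have hcL : (fun n => c n * L n) =O[atTop] L := by
    simpa only [one_mul] using hc.mul (isBigO_refl L atTop)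
  refine hcL.congr' ?_ .rfl
  filter_upwards [hf, eventually_ne_atTop 0] with n hn hn0
  rw [hn, mul_div_cancel₀ _ (Nat.cast_ne_zero.2 hn0)]

lemma isLittleO_of_mul_isBigO_of_tendsto_atTop {f g h : ι → ℝ}
    (hfg : (fun n => g n * f n) =O[l] h) (hg : Tendsto g l atTop) : f =o[l] h := by
  have hinv : (fun n => (g n)⁻¹) =o[l] fun _ => (1 : ℝ) :=
    (isLittleO_one_iff ℝ).2 hg.inv_tendsto_atTop
  refine (hinv.mul_isBigO hfg).congr' ?_ (.of_forall fun n => one_mul _)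
  filter_upwards [hg.eventually_ne_atTop 0] with n hn
  exact inv_mul_cancel_left₀ hn (f n)

/-- In the scaling of the paper `N` is `n αₙ`, `L` is `log n`, `i` is the first and `j` the last
class. -/
theorem prr_small_general {r : ℕ} {μ : Fin (r + 1) → ℝ} (hμ : ∀ k, 0 ≤ μ k)
    {K : ι → Fin (r + 1) → ℕ} {i j : Fin (r + 1)} (hμj : 0 < μ j)
    (hKi : ∀ᶠ n in l, K n i ≤ P n) (hKj : ∀ᶠ n in l, K n j ≤ P n) {N L : ι → ℝ}
    (hlamb : (fun n => N n * lamb μ (K n) (P n) i) =O[l] L)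
    (hpii : Tendsto (fun n => N n * pEdge (P n) (K n i) (K n i)) l atTop) :
    (fun n => pEdge (P n) (K n j) (K n j) * N n) =o[l] fun n => L n ^ 2 := by
  have hpij : (fun n => N n * pEdge (P n) (K n i) (K n j)) =O[l] L :=
    ((isBigO_refl N l).mul (isBigO_pEdge_lamb hμ K i hμj)).trans hlamb
  refine isLittleO_of_mul_isBigO_of_tendsto_atTop ?_ hpii
  calc (fun n => N n * pEdge (P n) (K n i) (K n i) * (pEdge (P n) (K n j) (K n j) * N n))
      = fun n => N n ^ 2 * (pEdge (P n) (K n i) (K n i) * pEdge (P n) (K n j) (K n j)) := by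
        ext n; ring
    _ =O[l] fun n => N n ^ 2 * pEdge (P n) (K n i) (K n j) ^ 2 :=
        (isBigO_refl _ l).mul (isBigO_pEdge_self_mul_pEdge_self hKi hKj)
    _ = fun n => (N n * pEdge (P n) (K n i) (K n j)) ^ 2 := by ext n; rw [mul_pow]
    _ =O[l] fun n => L n ^ 2 := hpij.pow 2

end ScalingAsymptotics

/-- under the scaling `αₙ λ₁(n) = cₙ log n / n` with `cₙ → c > 0` and
`p₁₁(n) = ω(1/(n αₙ))`, one has `p_{rr}(n) = o((log n)²/(n αₙ))`. -/
theorem prr_small {r : ℕ} (μ : Fin (r + 1) → ℝ)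
    (hμpos : ∀ i, 0 < μ i) (hμsum : ∑ i, μ i = 1)
    (K : ℕ → Fin (r + 1) → ℕ) (P : ℕ → ℕ) (α : ℕ → ℝ)
    (hK1 : ∀ n, 1 ≤ K n 0) (hKmono : ∀ n, Monotone (K n))
    (hKP : ∀ n, 2 * K n (Fin.last r) ≤ P n)
    (hα : ∀ n, α n ∈ Set.Ioo (0 : ℝ) 1)
    (cseq : ℕ → ℝ) (c : ℝ)
    (hscal : ∀ n, 2 ≤ n → α n * lamb μ (K n) (P n) 0 = cseq n * Real.log n / n)
    (hc : Tendsto cseq atTop (nhds c)) (hcpos : 0 < c)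
    (hp11 : Tendsto (fun n : ℕ => (n : ℝ) * α n * pEdge (P n) (K n 0) (K n 0)) atTop atTop) :
    Tendsto
      (fun n : ℕ =>
        pEdge (P n) (K n (Fin.last r)) (K n (Fin.last r)) * ((n : ℝ) * α n) / (Real.log n) ^ 2)
      atTop (nhds 0) := by
  have hK : ∀ n i, K n i ≤ P n := fun n i => by
    linarith [hKmono n (Fin.le_last i), hKP n]
  have hlamb : (fun n : ℕ => n * α n * lamb μ (K n) (P n) 0) =O[atTop] fun n : ℕ => Real.log n := by
    simpa only [mul_assoc] using
      isBigO_natCast_mul_of_eq_mul_div ((eventually_ge_atTop 2).mono hscal) (hc.isBigO_one ℝ)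
  exact (prr_small_general (fun k => (hμpos k).le) (hμpos _) (.of_forall (hK · 0))
    (.of_forall (hK · _)) hlamb hp11).tendsto_div_nhds_zero
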